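/- Suppose q ∈ K is a primitive l-th root of unity with l ≥ 2 and K is a field. Then the center of the rank-one quantized Weyl algebra A₁^q is exactly the K-subalgebra generated by x^l and y^l, and this subalgebra is isomorphic to a polynomial ring in two variables over K. -/

import Mathlib

noncomputable section

/-- Relation defining the rank-one quantized Weyl algebra: x*y - q*(y*x) = 1. -/
inductive WeylRel (K : Type*) [Field K] (q : K) :
    FreeAlgebra K (Fin 2) → FreeAlgebra K (Fin 2) → Prop
  | rel : WeylRel K q (FreeAlgebra.ι K (0 : Fin 2) * FreeAlgebra.ι K 1 -
      algebraMap K _ q * (FreeAlgebra.ι K 1 * FreeAlgebra.ι K 0)) 1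

/-- The rank-one quantized Weyl algebra A₁^q. -/
abbrev Weyl (K : Type*) [Field K] (q : K) := RingQuot (WeylRel K q)

/-- The generator x of A₁^q. -/
def wx (K : Type*) [Field K] (q : K) : Weyl K q :=
  RingQuot.mkAlgHom K (WeylRel K q) (FreeAlgebra.ι K 0)

/-- The generator y of A₁^q. -/
def wy (K : Type*) [Field K] (q : K) : Weyl K q :=
  RingQuot.mkAlgHom K (WeylRel K q) (FreeAlgebra.ι K 1)

/-!
Letting `A₁^q` act on `K[X][Y]`, with `y` as multiplication by `Y` and `x` as `f(Y) ↦ X f(q Y)` plus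
the `q`-derivative, and evaluating at `1` sends `w = ∑ y ^ a f_a(x)` to `∑ f_a(X) Y ^ a`; hence the
monomials `y ^ a x ^ b` form a basis. In these coordinates `x w = w x` reads
`[a + 1] f_{a + 1} = (1 - q) X [a] f_a`, where `[n]` is the `q`-number, so inductively `[a] f_a = 0`
for all `a`. The anti-automorphism exchanging `x` and `y` turns this into the corresponding
statement about elements commuting with `y`. So a central element involves only monomials with
`[a] = [b] = 0`, that is, with `a` and `b` divisible by `l`. Conversely `[l] = 0` forces
`q ^ l = 1`, so `x y ^ l = q ^ l y ^ l x + [l] y ^ (l - 1)` shows that `y ^ l` is central, and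
likewise `x ^ l`.
-/

/-- The `q`-number `[n] = 1 + q + ⋯ + q ^ (n - 1)`, through which the commutation relations of the
powers of `x` and `y` are expressed. -/
def qNumber {R : Type*} [Semiring R] (q : R) (n : ℕ) : R := ∑ i ∈ Finset.range n, q ^ i

section Semiring

variable {R : Type*} [Semiring R]

@[simp] lemma qNumber_zero (q : R) : qNumber q 0 = 0 := by simp [qNumber]

lemma qNumber_succ (q : R) (n : ℕ) : qNumber q (n + 1) = q * qNumber q n + 1 :=
  geom_sum_succ

lemma map_qNumber {S : Type*} [Semiring S] (f : R →+* S) (q : R) (n : ℕ) :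
    f (qNumber q n) = qNumber (f q) n := by simp [qNumber]

end Semiring

section Ring

variable {R : Type*} [Ring R] {q : R} {n : ℕ}

lemma qNumber_mul_sub_one (q : R) (n : ℕ) : qNumber q n * (q - 1) = q ^ n - 1 :=
  geom_sum_mul q n

lemma pow_eq_one_of_qNumber_eq_zero (h : qNumber q n = 0) : q ^ n = 1 := by
  rw [← sub_eq_zero, ← qNumber_mul_sub_one, h, zero_mul]

end Ring

lemma qNumber_eq_zero_iff_dvd {R : Type*} [CommRing R] [IsDomain R] {q : R} {l : ℕ} (hl : 1 < l)
    (hq : IsPrimitiveRoot q l) (n : ℕ) : qNumber q n = 0 ↔ l ∣ n := by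
  rw [← mul_left_inj' (sub_ne_zero.2 (hq.ne_one hl)), qNumber_mul_sub_one, zero_mul, sub_eq_zero,
    hq.pow_eq_one_iff_dvd]

/-- The relation `x y - q y x = 1` between two elements of an algebra, with the `y x` term moved to
the right-hand side. -/
def IsQWeylPair {R A : Type*} [CommRing R] [Ring A] [Algebra R A] (q : R) (x y : A) : Prop :=
  x * y = q • (y * x) + 1

namespace IsQWeylPair

open MulOpposite

variable {R A : Type*} [CommRing R] [Ring A] [Algebra R A] {q : R} {x y : A}

protected lemma eq (h : IsQWeylPair q x y) : x * y = q • (y * x) + 1 := h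

protected lemma op (h : IsQWeylPair q x y) : IsQWeylPair q (op y) (op x) := by
  simpa [IsQWeylPair] using congrArg MulOpposite.op h

lemma of_algebraMap {S : Type*} [CommRing S] [Algebra R S] [Algebra S A] [IsScalarTower R S A]
    (h : IsQWeylPair (algebraMap R S q) x y) : IsQWeylPair q x y := by
  rwa [IsQWeylPair, algebraMap_smul] at h

-- For `n = 0` the truncated exponent `n - 1` is harmless, since `[0] = 0`.
lemma mul_pow_eq (h : IsQWeylPair q x y) (n : ℕ) :
    x * y ^ n = q ^ n • (y ^ n * x) + qNumber q n • y ^ (n - 1) := by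
  induction n with
  | zero => simp
  | succ n ih =>
    have mul_smul_pow_pred : y * (qNumber q n • y ^ (n - 1)) = qNumber q n • y ^ n := by
      cases n <;> simp [pow_succ']
    calc x * y ^ (n + 1) = q • (y * (x * y ^ n)) + y ^ n := by
          rw [pow_succ', ← mul_assoc, h, add_mul, one_mul, smul_mul_assoc, mul_assoc]
      _ = q ^ (n + 1) • (y ^ (n + 1) * x) + qNumber q (n + 1) • y ^ n := by
          rw [ih, mul_add, mul_smul_pow_pred, qNumber_succ, pow_succ' y, pow_succ' q]
          simp only [mul_smul_comm, mul_assoc]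
          module

lemma commute_pow_right (h : IsQWeylPair q x y) {n : ℕ} (hn : qNumber q n = 0) :
    Commute x (y ^ n) := by
  rw [Commute, SemiconjBy, h.mul_pow_eq, hn, pow_eq_one_of_qNumber_eq_zero hn, one_smul, zero_smul,
    add_zero]

lemma commute_pow_left (h : IsQWeylPair q x y) {n : ℕ} (hn : qNumber q n = 0) :
    Commute (x ^ n) y :=
  (h.op.commute_pow_right hn).unop.symm

end IsQWeylPair

section QDerivative

open Polynomial

variable {R : Type*} [CommRing R]

/-- The Jackson `q`-derivative on polynomials, sending `X ^ n` to `[n] X ^ (n - 1)`. -/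
def qDerivative (q : R) : R[X] →ₗ[R] R[X] :=
  lsum fun n => qNumber q n • monomial (n - 1)

lemma coeff_qDerivative (q : R) (f : R[X]) (n : ℕ) :
    (qDerivative q f).coeff n = qNumber q (n + 1) * f.coeff (n + 1) := by
  induction f using Polynomial.induction_on' with
  | add f g hf hg => simp only [map_add, coeff_add, hf, hg, mul_add]
  | monomial m c =>
    rcases m with _ | m
    · simp [qDerivative]
    · simp +contextual [qDerivative, coeff_monomial]

/-- The operator `f(X) ↦ s f(q X) + (D_q f)(X)`, the image of `x` in the representation of the
quantized Weyl algebra on `R[X]` in which `y` is multiplication by `X`. -/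
def qWeylOperator (q s : R) : Module.End R R[X] :=
  s • (aeval (C q * X) : R[X] →ₐ[R] R[X]).toLinearMap + qDerivative q

lemma coeff_qWeylOperator (q s : R) (f : R[X]) (n : ℕ) :
    (qWeylOperator q s f).coeff n =
      s * q ^ n * f.coeff n + qNumber q (n + 1) * f.coeff (n + 1) := by
  simp only [qWeylOperator, LinearMap.add_apply, LinearMap.smul_apply, AlgHom.toLinearMap_apply,
    ← comp_eq_aeval, coeff_add, coeff_smul, comp_C_mul_X_coeff, coeff_qDerivative, smul_eq_mul]
  ring

lemma isQWeylPair_qWeylOperator (q s : R) :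
    IsQWeylPair q (qWeylOperator q s) (LinearMap.mulLeft R (X : R[X])) := by
  refine LinearMap.ext fun f => Polynomial.ext fun n => ?_
  rcases n with _ | n
  · simp [coeff_qWeylOperator, qNumber_succ]
  · simp only [Module.End.mul_apply, LinearMap.mulLeft_apply, coeff_qWeylOperator, coeff_X_mul,
      qNumber_succ _ (n + 1), LinearMap.add_apply, LinearMap.smul_apply, Module.End.one_apply,
      coeff_add, coeff_smul, smul_eq_mul]
    ring

end QDerivative

open scoped IsMulCommutative in
lemma nonempty_adjoin_pair_algEquiv_mvPolynomial {R A : Type*} [CommRing R] [Ring A] [Algebra R A]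
    {u v : A} (huv : Commute u v)
    (hli : LinearIndependent R fun p : ℕ × ℕ => v ^ p.1 * u ^ p.2) :
    Nonempty (Algebra.adjoin R {u, v} ≃ₐ[R] MvPolynomial (Fin 2) R) := by
  set S := Algebra.adjoin R {u, v}
  have hu : u ∈ S := Algebra.subset_adjoin (by simp)
  have hv : v ∈ S := Algebra.subset_adjoin (by simp)
  have : IsMulCommutative S := Algebra.isMulCommutative_adjoin R <| by
    rintro _ (rfl | rfl) _ (rfl | rfl)
    exacts [rfl, huv.eq, huv.eq.symm, rfl]
  let φ : MvPolynomial (Fin 2) R →ₐ[R] A := S.val.comp (MvPolynomial.aeval ![⟨u, hu⟩, ⟨v, hv⟩])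
  have φ_monomial (m : Fin 2 →₀ ℕ) : φ (MvPolynomial.monomial m 1) = v ^ m 1 * u ^ m 0 := by
    simp [φ, MvPolynomial.aeval_monomial, Finsupp.prod_fintype, (huv.pow_pow _ _).eq]
  have φ_injective : Function.Injective φ := by
    refine LinearMap.injective_of_linearIndependent (f := φ.toLinearMap)
      (MvPolynomial.basisMonomials (Fin 2) R).span_eq ?_
    have exponents_injective : Function.Injective fun m : Fin 2 →₀ ℕ => (m 1, m 0) := by
      intro m n h
      simpa [Finsupp.ext_iff, and_comm] using h
    simpa [Function.comp_def, φ_monomial] using hli.comp _ exponents_injective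
  have φ_range : φ.range = S := by
    refine le_antisymm ?_ (Algebra.adjoin_le ?_)
    · rintro _ ⟨f, rfl⟩
      exact SetLike.coe_mem _
    · exact Set.pair_subset ⟨MvPolynomial.X 0, by simp [φ]⟩ ⟨MvPolynomial.X 1, by simp [φ]⟩
  rw [← φ_range]
  exact ⟨(AlgEquiv.ofInjective φ φ_injective).symm⟩

namespace Weyl

open MulOpposite Polynomial

variable {K : Type*} [Field K] {q : K}

lemma isQWeylPair (q : K) : IsQWeylPair q (wx K q) (wy K q) := by
  have h := RingQuot.mkAlgHom_rel K (WeylRel.rel (K := K) (q := q))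
  simpa [IsQWeylPair, wx, wy, ← Algebra.smul_def, sub_eq_iff_eq_add'] using h

lemma adjoin_eq_top (q : K) : Algebra.adjoin K {wx K q, wy K q} = ⊤ := by
  have hrange : {wx K q, wy K q} =
      RingQuot.mkAlgHom K (WeylRel K q) '' Set.range (FreeAlgebra.ι K) := by
    simp [← Set.range_comp, Set.ext_iff, wx, wy, eq_comm]
  rw [hrange, ← AlgHom.map_adjoin, FreeAlgebra.adjoin_range_ι, Algebra.map_top,
    AlgHom.range_eq_top]
  exact RingQuot.mkAlgHom_surjective K _

lemma mem_center_of_commute {w : Weyl K q} (hx : Commute (wx K q) w) (hy : Commute (wy K q) w) :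
    w ∈ Subalgebra.center K (Weyl K q) := by
  have hle : Algebra.adjoin K {wx K q, wy K q} ≤ Subalgebra.centralizer K {w} := by
    rw [Algebra.adjoin_le_iff, Set.pair_subset_iff]
    simp [Set.mem_centralizer_iff, hx.eq, hy.eq]
  rw [adjoin_eq_top] at hle
  exact Subalgebra.mem_center_iff.2 fun v =>
    (Subalgebra.mem_centralizer_iff K |>.1 (hle (Algebra.mem_top (x := v))) w rfl).symm

/-- The homomorphism out of `Weyl K q` given by the images `x`, `y` of the generators. -/
def lift {A : Type*} [Ring A] [Algebra K A] {x y : A} (h : IsQWeylPair q x y) :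
    Weyl K q →ₐ[K] A :=
  RingQuot.liftAlgHom K ⟨FreeAlgebra.lift K ![x, y], by
    rintro _ _ ⟨⟩
    simpa [← Algebra.smul_def, sub_eq_iff_eq_add'] using h.eq⟩

section Lift

variable {A : Type*} [Ring A] [Algebra K A] {x y : A}

@[simp] lemma lift_wx (h : IsQWeylPair q x y) : lift h (wx K q) = x := by simp [lift, wx]

@[simp] lemma lift_wy (h : IsQWeylPair q x y) : lift h (wy K q) = y := by simp [lift, wy]

end Lift

/-- The anti-automorphism of `Weyl K q` exchanging `x` and `y`, as a homomorphism to the opposite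
algebra. -/
def swap (q : K) : Weyl K q →ₐ[K] (Weyl K q)ᵐᵒᵖ := lift (isQWeylPair q).op

/-- The representation of `Weyl K q` on `K[X][Y]` in which `y` multiplies by `Y` and `x` acts by
`f(Y) ↦ X f(q Y) + (D_q f)(Y)`. -/
def rep (q : K) : Weyl K q →ₐ[K] Module.End K[X] K[X][X] :=
  lift (isQWeylPair_qWeylOperator (algebraMap K K[X] q) X).of_algebraMap

/-- The polynomial `∑ c (a, b) X ^ b Y ^ a` attached to `w = ∑ c (a, b) y ^ a x ^ b`, obtained by
letting `w` act on `1`. -/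
def symbol (q : K) : Weyl K q →ₗ[K] K[X][X] where
  toFun w := rep q w 1
  map_add' := by simp
  map_smul' := by simp

lemma symbol_wx_mul (w : Weyl K q) :
    symbol q (wx K q * w) = qWeylOperator (C q) X (symbol q w) := by
  simp [symbol, rep]

lemma symbol_wy_mul (w : Weyl K q) : symbol q (wy K q * w) = X * symbol q w := by
  simp [symbol, rep]

lemma symbol_mul_wx (w : Weyl K q) : symbol q (w * wx K q) = C X * symbol q w := by
  have hx : rep q (wx K q) 1 = (X : K[X]) • (1 : K[X][X]) := by
    ext n : 1
    rcases n with _ | n <;> simp [rep, coeff_qWeylOperator, coeff_one]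
  calc rep q (w * wx K q) 1 = rep q w (rep q (wx K q) 1) := by rw [map_mul, Module.End.mul_apply]
    _ = C X * rep q w 1 := by rw [hx, map_smul, smul_eq_C_mul]

lemma symbol_monomial (a b : ℕ) :
    symbol q (wy K q ^ a * wx K q ^ b) = monomial a (monomial b 1) := by
  induction a with
  | zero =>
    induction b with
    | zero => simp [symbol]
    | succ b ih =>
      rw [pow_succ (wx K q), ← mul_assoc, symbol_mul_wx, ih, C_mul_monomial, X_mul_monomial]
  | succ a ih => rw [pow_succ', mul_assoc, symbol_wy_mul, ih, X_mul_monomial]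

lemma linearIndependent_monomial (q : K) :
    LinearIndependent K fun p : ℕ × ℕ => wy K q ^ p.1 * wx K q ^ p.2 := by
  refine .of_comp (symbol q) ?_
  convert! ((basisMonomials K).smulTower (basisMonomials K[X])).linearIndependent.comp Prod.swap
    Prod.swap_injective
  ext p : 1
  simp [symbol_monomial, smul_monomial]

lemma span_monomial_eq_top (q : K) :
    Submodule.span K (Set.range fun p : ℕ × ℕ => wy K q ^ p.1 * wx K q ^ p.2) = ⊤ := by
  set S := Submodule.span K (Set.range fun p : ℕ × ℕ => wy K q ^ p.1 * wx K q ^ p.2)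
  have monomial_mem (a b : ℕ) : wy K q ^ a * wx K q ^ b ∈ S := Submodule.subset_span ⟨(a, b), rfl⟩
  have wx_mul_mem : S ≤ S.comap (LinearMap.mulLeft K (wx K q)) := by
    refine Submodule.span_le.2 ?_
    rintro _ ⟨⟨a, b⟩, rfl⟩
    simp only [SetLike.mem_coe, Submodule.mem_comap, LinearMap.mulLeft_apply]
    rw [← mul_assoc, (isQWeylPair q).mul_pow_eq, add_mul, smul_mul_assoc, smul_mul_assoc, mul_assoc,
      ← pow_succ']
    exact S.add_mem (S.smul_mem _ (monomial_mem _ _)) (S.smul_mem _ (monomial_mem _ _))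
  have wy_mul_mem : S ≤ S.comap (LinearMap.mulLeft K (wy K q)) := by
    refine Submodule.span_le.2 ?_
    rintro _ ⟨⟨a, b⟩, rfl⟩
    simpa [← mul_assoc, ← pow_succ'] using monomial_mem (a + 1) b
  have mul_mem (w : Weyl K q) : ∀ s ∈ S, w * s ∈ S := by
    induction (adjoin_eq_top q ▸ Algebra.mem_top : w ∈ Algebra.adjoin K {wx K q, wy K q})
      using Algebra.adjoin_induction with
    | mem w hw =>
      rcases hw with rfl | rfl
      exacts [wx_mul_mem, wy_mul_mem]
    | algebraMap c => exact fun s hs => by simpa [← Algebra.smul_def] using S.smul_mem c hs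
    | add v w _ _ hv hw => exact fun s hs => by simpa [add_mul] using S.add_mem (hv s hs) (hw s hs)
    | mul v w _ _ hv hw => exact fun s hs => by simpa [mul_assoc] using hv _ (hw s hs)
  exact Submodule.eq_top_iff'.2 fun w => by simpa using mul_mem w _ (monomial_mem 0 0)

/-- The Poincaré–Birkhoff–Witt basis `y ^ a x ^ b` of `Weyl K q`, indexed by the pairs `(a, b)`. -/
def pbwBasis (q : K) : Module.Basis (ℕ × ℕ) K (Weyl K q) :=
  .mk (linearIndependent_monomial q) (span_monomial_eq_top q).ge

lemma pbwBasis_apply (p : ℕ × ℕ) : pbwBasis q p = wy K q ^ p.1 * wx K q ^ p.2 := by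
  simp [pbwBasis]

lemma coeff_coeff_symbol (w : Weyl K q) (a b : ℕ) :
    ((symbol q w).coeff a).coeff b = (pbwBasis q).repr w (a, b) := by
  suffices lcoeff K b ∘ₗ (lcoeff K[X] a).restrictScalars K ∘ₗ symbol q =
      Finsupp.lapply (a, b) ∘ₗ (pbwBasis q).repr.toLinearMap from LinearMap.congr_fun this w
  refine (pbwBasis q).ext fun p => ?_
  suffices ((symbol q (pbwBasis q p)).coeff a).coeff b = Finsupp.single p (1 : K) (a, b) by simpa
  rw [pbwBasis_apply, symbol_monomial, coeff_monomial, apply_ite (coeff · b), coeff_monomial]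
  simp [Finsupp.single_apply, Prod.ext_iff, ite_and]

lemma repr_unop_swap (w : Weyl K q) (a b : ℕ) :
    (pbwBasis q).repr (unop (swap q w)) (a, b) = (pbwBasis q).repr w (b, a) := by
  suffices Finsupp.lapply (a, b) ∘ₗ (pbwBasis q).repr.toLinearMap ∘ₗ
      (opLinearEquiv K).symm.toLinearMap ∘ₗ (swap q).toLinearMap =
      Finsupp.lapply (b, a) ∘ₗ (pbwBasis q).repr.toLinearMap from LinearMap.congr_fun this w
  refine (pbwBasis q).ext fun p => ?_
  have : unop (swap q (pbwBasis q p)) = pbwBasis q p.swap := by simp [pbwBasis_apply, swap]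
  simp [this, Finsupp.single_apply, Prod.ext_iff, and_comm]

lemma qNumber_mul_coeff_symbol_of_commute_wx {w : Weyl K q} (hw : Commute (wx K q) w) (a : ℕ) :
    qNumber (C q) a * (symbol q w).coeff a = 0 := by
  have hsymbol : qWeylOperator (C q) X (symbol q w) = C X * symbol q w := by
    rw [← symbol_wx_mul, hw.eq, symbol_mul_wx]
  have recursion (a : ℕ) : qNumber (C q) (a + 1) * (symbol q w).coeff (a + 1) =
      (1 - C q) * X * (qNumber (C q) a * (symbol q w).coeff a) := by
    have hcoeff := congrArg (coeff · a) hsymbol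
    simp only [coeff_qWeylOperator, coeff_C_mul] at hcoeff
    linear_combination hcoeff + X * (symbol q w).coeff a * qNumber_mul_sub_one (C q) a
  induction a with
  | zero => simp
  | succ a ih => rw [recursion, ih, mul_zero]

lemma qNumber_mul_repr_of_commute_wx {w : Weyl K q} (hw : Commute (wx K q) w) (a b : ℕ) :
    qNumber q a * (pbwBasis q).repr w (a, b) = 0 := by
  rw [← coeff_coeff_symbol, ← coeff_C_mul, map_qNumber, qNumber_mul_coeff_symbol_of_commute_wx hw,
    coeff_zero]

lemma qNumber_mul_repr_of_commute_wy {w : Weyl K q} (hw : Commute (wy K q) w) (a b : ℕ) :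
    qNumber q b * (pbwBasis q).repr w (a, b) = 0 := by
  have hswap : Commute (wx K q) (unop (swap q w)) := by
    simpa [swap] using (hw.map (swap q)).unop
  rw [← repr_unop_swap, qNumber_mul_repr_of_commute_wx hswap]

section Center

variable {l : ℕ}

lemma wx_pow_mem_center (hl : qNumber q l = 0) : wx K q ^ l ∈ Subalgebra.center K (Weyl K q) :=
  mem_center_of_commute (Commute.self_pow _ _) ((isQWeylPair q).commute_pow_left hl).symm

lemma wy_pow_mem_center (hl : qNumber q l = 0) : wy K q ^ l ∈ Subalgebra.center K (Weyl K q) :=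
  mem_center_of_commute ((isQWeylPair q).commute_pow_right hl) (Commute.self_pow _ _)

lemma center_le_adjoin (hl : ∀ n, qNumber q n = 0 → l ∣ n) :
    Subalgebra.center K (Weyl K q) ≤ Algebra.adjoin K {wx K q ^ l, wy K q ^ l} := by
  intro w hw
  rw [Subalgebra.mem_center_iff] at hw
  rw [← (pbwBasis q).linearCombination_repr w, Finsupp.linearCombination_apply]
  refine Subalgebra.sum_mem _ fun ⟨a, b⟩ hab => Subalgebra.smul_mem _ ?_ _
  have hne : (pbwBasis q).repr w (a, b) ≠ 0 := Finsupp.mem_support_iff.1 hab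
  obtain ⟨a, rfl⟩ := hl a <|
    (mul_eq_zero.1 (qNumber_mul_repr_of_commute_wx (hw _) a b)).resolve_right hne
  obtain ⟨b, rfl⟩ := hl b <|
    (mul_eq_zero.1 (qNumber_mul_repr_of_commute_wy (hw _) _ b)).resolve_right hne
  rw [pbwBasis_apply, pow_mul, pow_mul]
  exact mul_mem (pow_mem (Algebra.subset_adjoin (by simp)) a)
    (pow_mem (Algebra.subset_adjoin (by simp)) b)

lemma center_eq_adjoin (hl : ∀ n, qNumber q n = 0 ↔ l ∣ n) :
    Subalgebra.center K (Weyl K q) = Algebra.adjoin K {wx K q ^ l, wy K q ^ l} := by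
  have hl0 : qNumber q l = 0 := (hl l).2 dvd_rfl
  refine le_antisymm (center_le_adjoin fun n => (hl n).1) (Algebra.adjoin_le ?_)
  exact Set.pair_subset (wx_pow_mem_center hl0) (wy_pow_mem_center hl0)

lemma linearIndependent_pow_mul_pow (q : K) (hl : l ≠ 0) :
    LinearIndependent K fun p : ℕ × ℕ => (wy K q ^ l) ^ p.1 * (wx K q ^ l) ^ p.2 := by
  have hinj : Function.Injective fun p : ℕ × ℕ => (l * p.1, l * p.2) := by
    intro p r h
    simpa [hl, Prod.ext_iff] using h
  simpa only [Function.comp_def, pow_mul] using (linearIndependent_monomial q).comp _ hinj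

end Center

end Weyl

/-- Besides a primitive `l`-th root of unity with `2 ≤ l`, this covers `q = 1` in characteristic
`l`, where it describes the center of the classical Weyl algebra. -/
theorem weyl_center_general (K : Type*) [Field K] (q : K) (l : ℕ) (hl : l ≠ 0)
    (hq : ∀ n, qNumber q n = 0 ↔ l ∣ n) :
    Subalgebra.center K (Weyl K q) = Algebra.adjoin K {wx K q ^ l, wy K q ^ l} ∧
      Nonempty ((Algebra.adjoin K {wx K q ^ l, wy K q ^ l} : Subalgebra K (Weyl K q))
        ≃ₐ[K] MvPolynomial (Fin 2) K) := by
  refine ⟨Weyl.center_eq_adjoin hq, ?_⟩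
  have hcomm : Commute (wx K q ^ l) (wy K q ^ l) :=
    ((Weyl.isQWeylPair q).commute_pow_right ((hq l).2 dvd_rfl)).pow_left l
  exact nonempty_adjoin_pair_algEquiv_mvPolynomial hcomm (Weyl.linearIndependent_pow_mul_pow q hl)

/-- If q is a primitive l-th root of unity (l ≥ 2), the center of A₁^q is the
K-subalgebra generated by x^l and y^l, and this subalgebra is isomorphic to a
polynomial ring in two variables over K. -/
theorem weyl_center (K : Type*) [Field K] [IsAlgClosed K] (q : K) (l : ℕ) (hl : 2 ≤ l)
    (hq : IsPrimitiveRoot q l) :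
    Subalgebra.center K (Weyl K q) = Algebra.adjoin K {wx K q ^ l, wy K q ^ l} ∧
      Nonempty ((Algebra.adjoin K {wx K q ^ l, wy K q ^ l} : Subalgebra K (Weyl K q))
        ≃ₐ[K] MvPolynomial (Fin 2) K) :=
  weyl_center_general K q l (by omega) (qNumber_eq_zero_iff_dvd hl hq)
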